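/- arXiv:1907.02664 — 5 statements merged into one kernel-verified Lean document; each statement's English description precedes it below -/
import Mathlib

section
/- Let t ≥ 1, k = 2t, m > k and q = m − k. Let F be a k×m real matrix such that every set of k columns of F is linearly independent, and let F⊥ be an m×q real matrix whose columns form a basis of the null space of F (viewing F as a linear map ℝ^m → ℝ^k). Then for every subset T ⊆ {1,…,m} with |T| ≥ m − t, the |T|×q submatrix F⊥_T obtained by restricting F⊥ to the rows indexed by T has full column rank q. -/
/-!
A combination `v` of the columns of `Fperp` that vanishes on the rows in `T` lies in the null space
of `F` and is supported on the complement of `T`, which has at most `t ≤ k` elements. It is thus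
a linear relation among at most `k` columns of `F`, so `v = 0`, and independence of the columns of
`Fperp` makes all coefficients zero. Hence the columns of the submatrix are independent.
-/

open Matrix

/-- Let `t ≥ 1`, `k = 2t`, `m > k`, `q = m - k`. If `F` is a `k × m` real
matrix every `k` of whose columns are linearly independent, and `Fperp` is an `m × q` matrix
whose columns form a basis of the null space of `F`, then for every subset `T` of the rows
with `|T| ≥ m - t`, the row-submatrix `Fperp_T` has full column rank `q`. -/
theorem stmt_0 (t k m q : ℕ) (ht : 1 ≤ t) (hk : k = 2 * t) (hm : k < m) (hq : q = m - k)
    (F : Matrix (Fin k) (Fin m) ℝ)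
    (hF : ∀ S : Finset (Fin m), S.card = k →
      LinearIndependent ℝ (fun j : {x // x ∈ S} => fun i : Fin k => F i j.1))
    (Fperp : Matrix (Fin m) (Fin q) ℝ)
    (hker : ∀ c : Fin q, F.mulVec (fun i => Fperp i c) = 0)
    (hli : LinearIndependent ℝ (fun c : Fin q => fun i : Fin m => Fperp i c))
    (hspan : ∀ v : Fin m → ℝ, F.mulVec v = 0 →
      v ∈ Submodule.span ℝ (Set.range (fun c : Fin q => fun i : Fin m => Fperp i c))) :
    ∀ T : Finset (Fin m), m - t ≤ T.card →
      (Fperp.submatrix (fun i : {x // x ∈ T} => i.1) id).rank = q := by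
  intro T hT
  -- A superset `S` of the complement of `T` with exactly `k` elements.
  obtain ⟨S, hTS, -, hS⟩ := Finset.exists_subsuperset_card_eq (n := k)
    (Finset.subset_univ Tᶜ)
    (by rw [Finset.card_compl, Fintype.card_fin]; omega)
    (by rw [Finset.card_univ, Fintype.card_fin]; omega)
  rw [← Matrix.rank_transpose]
  have key : LinearIndependent ℝ
      (Fperp.submatrix (fun i : {x // x ∈ T} => i.1) id)ᵀ.row := by
    rw [Fintype.linearIndependent_iff] at hli ⊢
    intro g hg
    have hvT : ∀ i ∈ T, ∑ c, g c * Fperp i c = 0 := by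
      intro i hi
      have := congrFun hg ⟨i, hi⟩
      simpa [Finset.sum_apply] using this
    have hker' : ∀ a, ∑ i, (∑ c, g c * Fperp i c) * F a i = 0 := by
      intro a
      simp_rw [Finset.sum_mul]
      rw [Finset.sum_comm]
      refine Finset.sum_eq_zero fun c _ => ?_
      have := congrFun (hker c) a
      simp only [Matrix.mulVec, dotProduct, Pi.zero_apply] at this
      rw [← mul_zero (g c), ← this, Finset.mul_sum]
      exact Finset.sum_congr rfl fun i _ => by ring
    have hvS := Fintype.linearIndependent_iff.mp (hF S hS)
      (fun j => ∑ c, g c * Fperp j.1 c) (by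
        funext a
        simp only [Finset.sum_apply, Pi.smul_apply, smul_eq_mul, Pi.zero_apply]
        rw [Finset.sum_coe_sort S (fun i => (∑ c, g c * Fperp i c) * F a i), ← hker' a]
        refine Finset.sum_subset (Finset.subset_univ S) fun i _ hi => ?_
        have hiT : i ∈ T := by
          by_contra h
          exact hi (hTS (Finset.mem_compl.mpr h))
        rw [hvT i hiT, zero_mul])
    refine hli g ?_
    funext i
    simp only [Finset.sum_apply, Pi.smul_apply, smul_eq_mul, Pi.zero_apply]
    by_cases hi : i ∈ T
    · exact hvT i hi
    · exact hvS ⟨i, hTS (Finset.mem_compl.mpr hi)⟩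
  simpa using key.rank_matrix
end

section
/- Let k < m and q = m − k. Let F be a k×m real matrix such that every set of k columns of F is linearly independent, and let F⊥ be an m×q real matrix whose columns form a basis of the null space of F. Then every set of q rows of F⊥ is linearly independent; equivalently, for every T ⊆ {1,…,m} with |T| = q, the q×q submatrix F⊥_T is invertible. -/
/-!
Suppose `x` is killed by the square submatrix of `Fperp` with rows in `T`. Then `v = Fperp *ᵥ x`
lies in the kernel of `F` and vanishes on `T`, so `F *ᵥ v = 0` is a linear relation among the
`k` columns of `F` indexed by the complement of `T`. These are independent, so `v = 0`, and
`x = 0` because the columns of `Fperp` are independent. Thus the submatrix is injective, hence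
invertible, and its rows are independent.
-/

open Matrix

/-- Let `k < m`, `q = m - k`. If `F` is a `k × m` real matrix every `k` of
whose columns are linearly independent, and `Fperp` is an `m × q` matrix whose columns form a
basis of the null space of `F`, then every set of `q` rows of `Fperp` is linearly independent;
equivalently, for every `T ⊆ {1,…,m}` with `|T| = q`, the `q × q` submatrix `Fperp_T`
(rows indexed by `T` via any enumeration) is invertible. -/
theorem stmt_1 (k m q : ℕ) (hm : k < m) (hq : q = m - k)
    (F : Matrix (Fin k) (Fin m) ℝ)
    (hF : ∀ S : Finset (Fin m), S.card = k →
      LinearIndependent ℝ (fun j : {x // x ∈ S} => fun i : Fin k => F i j.1))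
    (Fperp : Matrix (Fin m) (Fin q) ℝ)
    (hker : ∀ c : Fin q, F.mulVec (fun i => Fperp i c) = 0)
    (hli : LinearIndependent ℝ (fun c : Fin q => fun i : Fin m => Fperp i c))
    (hspan : ∀ v : Fin m → ℝ, F.mulVec v = 0 →
      v ∈ Submodule.span ℝ (Set.range (fun c : Fin q => fun i : Fin m => Fperp i c))) :
    ∀ T : Finset (Fin m), T.card = q →
      (LinearIndependent ℝ (fun i : {x // x ∈ T} => fun c : Fin q => Fperp i.1 c) ∧
        ∀ σ : Fin q ≃ {x // x ∈ T},
          IsUnit (Fperp.submatrix (fun i : Fin q => (σ i).1) (id : Fin q → Fin q))) := by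
  intro T hT
  have key : ∀ σ : Fin q ≃ {x // x ∈ T},
      IsUnit (Fperp.submatrix (fun i : Fin q => (σ i).1) (id : Fin q → Fin q)) := by
    intro σ
    rw [← Matrix.mulVec_injective_iff_isUnit]
    refine (injective_iff_map_eq_zero (Matrix.mulVecLin
      (Fperp.submatrix (fun i : Fin q => (σ i).1) (id : Fin q → Fin q)))).2 ?_
    intro x hx
    have hvT : ∀ i ∈ T, (Fperp *ᵥ x) i = 0 := by
      intro i hi
      have h := congrFun hx (σ.symm ⟨i, hi⟩)
      simpa [Matrix.mulVec, dotProduct] using h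
    have hFP : F * Fperp = 0 := by
      ext i c
      exact congrFun (hker c) i
    have hFv : F *ᵥ (Fperp *ᵥ x) = 0 := by
      rw [Matrix.mulVec_mulVec, hFP, Matrix.zero_mulVec]
    have hcard : Tᶜ.card = k := by
      rw [Finset.card_compl, Fintype.card_fin]
      omega
    have hvc := Fintype.linearIndependent_iff.1 (hF Tᶜ hcard)
      (fun j => (Fperp *ᵥ x) j.1) (by
        ext i
        have h := congrFun hFv i
        rw [Matrix.mulVec, dotProduct, ← Finset.sum_add_sum_compl T,
          Finset.sum_eq_zero (fun j hj => by rw [hvT j hj, mul_zero]), zero_add,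
          ← Finset.sum_coe_sort] at h
        simpa [Finset.sum_apply, mul_comm] using h)
    have hv : Fperp *ᵥ x = 0 := by
      ext i
      by_cases hi : i ∈ T
      · exact hvT i hi
      · exact hvc ⟨i, Finset.mem_compl.2 hi⟩
    ext c
    refine Fintype.linearIndependent_iff.1 hli x ?_ c
    ext i
    have h := congrFun hv i
    simpa [Matrix.mulVec, dotProduct, Finset.sum_apply, mul_comm] using h
  refine ⟨?_, key⟩
  let σ : Fin q ≃ {x // x ∈ T} := (T.equivFinOfCardEq hT).symm
  exact (linearIndependent_equiv σ).1 (Matrix.linearIndependent_rows_of_isUnit (key σ))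
end

section
/- Let t ≥ 1, k = 2t, m > k, q = m − k. Let F be a k×m real matrix such that every set of k columns of F is linearly independent, and let b_1, …, b_q ∈ ℝ^m be a basis of the null space of F. Let S_1, …, S_m be the p×N encoding matrices built from b_1,…,b_q (with p = ⌈N/q⌉), and for T ⊆ {1,…,m} let S_T denote the |T|p×N matrix obtained by stacking the blocks S_i for i ∈ T. Then for every T with |T| ≥ m − t, S_T has full column rank N. -/
/-!
If `S_T x = 0`, then for each block index `j` the vector `v = ∑ a, x (j q + a) • b a` of the null
space of `F` vanishes on `T`, so its support has at most `t ≤ k` elements. As any `k` columns of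
`F` are independent, a null vector supported on at most `k` coordinates is zero
(`null_vector_eq_zero`); hence `v = 0`, and the independence of the `b a` makes the `j`-th block
of `x` vanish. Thus `S_T` is injective, i.e. has full column rank.
-/

open Matrix

/-- The `p × N` encoding matrix `S i` of worker `i`, built from vectors `b 1, …, b q ∈ ℝ^m`:
its `(j, c)` entry (`0`-indexed) equals `b (c - j*q) i` whenever `j*q ≤ c < (j+1)*q`
(and `c < N`), and `0` otherwise. -/
def encS (m q p N : ℕ) (b : Fin q → Fin m → ℝ) (i : Fin m) : Matrix (Fin p) (Fin N) ℝ :=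
  Matrix.of fun (j : Fin p) (c : Fin N) =>
    if h : j.1 * q ≤ c.1 ∧ c.1 < (j.1 + 1) * q then
      b ⟨c.1 - j.1 * q, by
        obtain ⟨h1, h2⟩ := h
        rw [add_mul, one_mul] at h2
        omega⟩ i
    else 0

/-- A null vector of `F` whose support lies in a set of at most `k` coordinates is zero, because
the set extends to one indexing `k` independent columns. -/
lemma null_vector_eq_zero {k m : ℕ} (hm : k < m) (F : Matrix (Fin k) (Fin m) ℝ)
    (hF : ∀ S : Finset (Fin m), S.card = k →
      LinearIndependent ℝ (fun j : {x // x ∈ S} => fun i : Fin k => F i j.1))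
    (v : Fin m → ℝ) (hv : F.mulVec v = 0) (U : Finset (Fin m)) (hU : U.card ≤ k)
    (hsupp : ∀ i, i ∉ U → v i = 0) : v = 0 := by
  obtain ⟨S, hUS, -, hS⟩ := Finset.exists_subsuperset_card_eq (Finset.subset_univ U) hU
    (by simpa using hm.le)
  have hli := Fintype.linearIndependent_iff.1 (hF S hS) (fun j => v j.1) (by
    ext r
    have h1 : ∑ i, F r i * v i = 0 := congrFun hv r
    rw [← Finset.sum_subset (Finset.subset_univ S)
      (fun i _ hi => by rw [hsupp i (fun h => hi (hUS h)), mul_zero]),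
      ← Finset.sum_coe_sort S] at h1
    simpa [Finset.sum_apply, mul_comm] using h1)
  ext i
  by_cases hi : i ∈ S
  · exact hli ⟨i, hi⟩
  · exact hsupp i fun h => hi (hUS h)

/-- Row `j` of `encS` applied to `x` is coordinate `i` of the combination of the `b a` with
coefficients the `j`-th block of `x`, padded with zeros past `N`: the inner sum is `x (j q + a)`
when `j q + a < N` and `0` otherwise. -/
lemma encS_row_sum {m q p N : ℕ} (b : Fin q → Fin m → ℝ) (x : Fin N → ℝ) (i : Fin m)
    (j : Fin p) :
    ∑ c, encS m q p N b i j c * x c =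
      ∑ a : Fin q, (∑ c : Fin N, if c.1 = j.1 * q + a.1 then x c else 0) * b a i := by
  simp_rw [Finset.sum_mul]
  rw [Finset.sum_comm]
  refine Finset.sum_congr rfl fun c _ => ?_
  unfold encS
  simp only [Matrix.of_apply, ite_mul, zero_mul]
  split_ifs with h
  · have hlt : c.1 - j.1 * q < q := by
      have := h.2
      rw [add_mul, one_mul] at this
      omega
    rw [Finset.sum_eq_single ⟨c.1 - j.1 * q, hlt⟩]
    · rw [if_pos (by simp only; omega), mul_comm]
    · intro a _ ha
      refine if_neg fun hc => ha (Fin.ext ?_)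
      simp only
      omega
    · simp
  · rw [zero_mul, Finset.sum_eq_zero]
    intro a _
    refine if_neg fun hc => h ⟨by omega, ?_⟩
    rw [add_mul, one_mul]
    omega

/-- Let `t ≥ 1`, `k = 2t`, `m > k`, `q = m - k`. If `F` is a `k × m` real
matrix every `k` of whose columns are linearly independent, `b 1, …, b q` a basis of the null
space of `F`, and `S 1, …, S m` the `p × N` encoding matrices built from the `b`'s
(`p = ⌈N/q⌉`), then for every `T ⊆ {1,…,m}` with `|T| ≥ m - t`, the stacked matrix `S_T`
(blocks `S i` for `i ∈ T`) has full column rank `N`. -/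
theorem stmt_3 (t k m q N p : ℕ) (ht : 1 ≤ t) (hk : k = 2 * t) (hm : k < m)
    (hq : q = m - k) (hN : 1 ≤ N) (hp : p = (N + q - 1) / q)
    (F : Matrix (Fin k) (Fin m) ℝ)
    (hF : ∀ S : Finset (Fin m), S.card = k →
      LinearIndependent ℝ (fun j : {x // x ∈ S} => fun i : Fin k => F i j.1))
    (b : Fin q → Fin m → ℝ)
    (hker : ∀ c : Fin q, F.mulVec (b c) = 0)
    (hli : LinearIndependent ℝ b)
    (hspan : ∀ v : Fin m → ℝ, F.mulVec v = 0 → v ∈ Submodule.span ℝ (Set.range b)) :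
    ∀ T : Finset (Fin m), m - t ≤ T.card →
      (Matrix.of fun (ij : {x // x ∈ T} × Fin p) (c : Fin N) =>
        encS m q p N b ij.1.1 ij.2 c).rank = N := by
  intro T hT
  have hU : Tᶜ.card ≤ k := by
    rw [Finset.card_compl, Fintype.card_fin]
    omega
  have hq0 : 0 < q := by omega
  rw [Matrix.rank, LinearMap.finrank_range_of_inj, Module.finrank_fin_fun]
  rw [← LinearMap.ker_eq_bot, LinearMap.ker_eq_bot']
  intro x hx
  have hrow : ∀ i ∈ T, ∀ j : Fin p, ∑ c, encS m q p N b i j c * x c = 0 :=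
    fun i hi j => congrFun hx (⟨i, hi⟩, j)
  ext c
  have hj : c.1 / q < p := by
    rw [hp, Nat.div_lt_iff_lt_mul hq0]
    have h1 := Nat.div_add_mod (N + q - 1) q
    have h2 := Nat.mod_lt (N + q - 1) hq0
    have h3 := c.2
    rw [mul_comm] at h1
    omega
  set j : Fin p := ⟨c.1 / q, hj⟩ with hjdef
  set y : Fin q → ℝ := fun a => ∑ c : Fin N, if c.1 = j.1 * q + a.1 then x c else 0 with hy
  have hv : ∑ a, y a • b a = 0 := by
    refine null_vector_eq_zero hm F hF _ ?_ Tᶜ hU fun i hi => ?_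
    · simp [Matrix.mulVec_sum, Matrix.mulVec_smul, hker]
    · have h := hrow i (by simpa using hi) j
      rw [encS_row_sum] at h
      simpa [Finset.sum_apply] using h
  have hy0 := Fintype.linearIndependent_iff.1 hli y hv ⟨c.1 % q, Nat.mod_lt _ hq0⟩
  rw [hy] at hy0
  simp only [hjdef, Nat.div_add_mod', ← Fin.ext_iff] at hy0
  simpa using hy0
end

section
/- Let t ≥ 1, k = 2t, m > k, q = m − k. Let F be a k×m real matrix such that every set of k columns of F is linearly independent, let b_1, …, b_q ∈ ℝ^m be a basis of the null space of F, and let S = [S_1ᵀ ⋯ S_mᵀ]ᵀ be the pm×N stacked encoding matrix built from b_1,…,b_q. Suppose u, u' ∈ ℝ^N and e = (e_1,…,e_m), e' = (e'_1,…,e'_m) with each e_i, e'_i ∈ ℝ^p are such that at most t of the blocks e_i are nonzero, at most t of the blocks e'_i are nonzero, and S_i u + e_i = S_i u' + e'_i for every i ∈ {1,…,m}. Then u = u'. In particular, for a fixed matrix A and vector v, the product Av is uniquely determined by any collection of replies {S_i A v + e_i}_{i=1}^m in which at most t blocks e_i are nonzero. -/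
/-!
Put `d = u - u'`. Row `j` of the encoded words `S i *ᵥ d`, read across the workers `i`, is the
vector `w = ∑ r, d (j * q + r) • b r` of `ℝ^m` (`encS_mulVec`), which lies in the null space of
`F` because every `b r` does. It also equals row `j` of `e' - e`, so it is supported on at most `2 * t = k`
workers. Any `k` columns of `F` being independent, a null vector of `F` with such a small support
is zero (`eq_zero_of_mulVec_eq_zero_of_support`). Since the `b r` are linearly independent, all the
coefficients `d (j * q + r)` vanish, and every coordinate `c < N` has the form `j * q + r` with
`j = c / q < p` and `r = c % q`.
-/

open Matrix

/-- The `j`-th length-`q` chunk of `d`, padded with zeros beyond the last coordinate: its `r`-th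
entry is `d (j * q + r)`, written as a sum with at most one nonzero term. -/
noncomputable def chunk (q N : ℕ) (d : Fin N → ℝ) (j : ℕ) (r : Fin q) : ℝ :=
  ∑ c : Fin N, if j * q + r.1 = c.1 then d c else 0

lemma encS_apply (m q p N : ℕ) (b : Fin q → Fin m → ℝ) (i : Fin m) (j : Fin p) (c : Fin N) :
    encS m q p N b i j c = ∑ r : Fin q, if j.1 * q + r.1 = c.1 then b r i else 0 := by
  simp only [encS, Matrix.of_apply]
  split_ifs with h
  · rw [Finset.sum_eq_single ⟨c.1 - j.1 * q, by
      obtain ⟨h1, h2⟩ := h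
      rw [add_mul, one_mul] at h2
      omega⟩]
    · rw [if_pos]
      simp only
      omega
    · intro r _ hr
      rw [if_neg]
      intro h'
      apply hr
      ext
      simp only
      omega
    · simp
  · symm
    apply Finset.sum_eq_zero
    intro r _
    rw [if_neg]
    intro h'
    apply h
    have := r.2
    rw [add_mul, one_mul]
    omega

lemma encS_mulVec (m q p N : ℕ) (b : Fin q → Fin m → ℝ) (d : Fin N → ℝ) (i : Fin m)
    (j : Fin p) :
    (encS m q p N b i).mulVec d j = (∑ r : Fin q, chunk q N d j.1 r • b r) i := by
  simp only [Matrix.mulVec, dotProduct, encS_apply, chunk, Finset.sum_apply, Pi.smul_apply,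
    smul_eq_mul, Finset.sum_mul]
  rw [Finset.sum_comm]
  refine Finset.sum_congr rfl fun r _ => Finset.sum_congr rfl fun c _ => ?_
  split_ifs <;> ring

/-- The null space of `F` is a code of minimum distance greater than `k`. -/
lemma eq_zero_of_mulVec_eq_zero_of_support {k m : ℕ} (hm : k ≤ m)
    (F : Matrix (Fin k) (Fin m) ℝ)
    (hF : ∀ S : Finset (Fin m), S.card = k →
      LinearIndependent ℝ (fun j : {x // x ∈ S} => fun i : Fin k => F i j.1))
    (w : Fin m → ℝ) (hw : F.mulVec w = 0) (T : Finset (Fin m)) (hT : T.card ≤ k)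
    (hs : ∀ i, i ∉ T → w i = 0) : w = 0 := by
  obtain ⟨S, hTS, hS⟩ := Finset.exists_superset_card_eq hT (by simpa using hm)
  have hli := Fintype.linearIndependent_iff.1 (hF S hS) (fun x => w x.1) (by
    ext i
    have h1 : ∑ x : Fin m, F i x * w x = 0 := congrFun hw i
    rw [← Finset.sum_subset (Finset.subset_univ S) (fun x _ hx => by
      rw [hs x (fun h => hx (hTS h)), mul_zero]), ← Finset.sum_coe_sort] at h1
    simpa [Finset.sum_apply, mul_comm] using h1)
  ext i
  by_cases hi : i ∈ S
  · exact hli ⟨i, hi⟩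
  · exact hs i fun h => hi (hTS h)

/-- With the encoding matrices `S i` built from a basis `b` of the null
space of a `k × m` matrix `F` every `k = 2t` of whose columns are linearly independent:
if `u, u' ∈ ℝ^N` and per-worker error blocks `e i, e' i ∈ ℝ^p` satisfy that at most `t` of
the blocks `e i` are nonzero, at most `t` of the blocks `e' i` are nonzero, and
`S i *ᵥ u + e i = S i *ᵥ u' + e' i` for every worker `i`, then `u = u'`.  In particular the
product `A *ᵥ v` is uniquely determined by the replies `{S i *ᵥ (A *ᵥ v) + e i}` with at
most `t` corrupted blocks. -/
theorem stmt_4 (t k m q N p : ℕ) (ht : 1 ≤ t) (hk : k = 2 * t) (hm : k < m)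
    (hq : q = m - k) (hN : 1 ≤ N) (hp : p = (N + q - 1) / q)
    (F : Matrix (Fin k) (Fin m) ℝ)
    (hF : ∀ S : Finset (Fin m), S.card = k →
      LinearIndependent ℝ (fun j : {x // x ∈ S} => fun i : Fin k => F i j.1))
    (b : Fin q → Fin m → ℝ)
    (hker : ∀ c : Fin q, F.mulVec (b c) = 0)
    (hli : LinearIndependent ℝ b)
    (hspan : ∀ v : Fin m → ℝ, F.mulVec v = 0 → v ∈ Submodule.span ℝ (Set.range b))
    (u u' : Fin N → ℝ) (e e' : Fin m → Fin p → ℝ)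
    (he : {i : Fin m | e i ≠ 0}.ncard ≤ t) (he' : {i : Fin m | e' i ≠ 0}.ncard ≤ t)
    (heq : ∀ i : Fin m,
      (encS m q p N b i).mulVec u + e i = (encS m q p N b i).mulVec u' + e' i) :
    u = u' := by
  classical
  have hq0 : 0 < q := by omega
  set d : Fin N → ℝ := u - u' with hd
  have hrow : ∀ i, (encS m q p N b i).mulVec d = e' i - e i := by
    intro i
    rw [hd, Matrix.mulVec_sub, sub_eq_sub_iff_add_eq_add, heq i, add_comm]
  have hchunk : ∀ j : Fin p, ∀ r, chunk q N d j.1 r = 0 := by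
    intro j
    apply Fintype.linearIndependent_iff.1 hli
    rw [Set.ncard_eq_toFinset_card'] at he he'
    refine eq_zero_of_mulVec_eq_zero_of_support hm.le F hF _ ?_
      ({i : Fin m | e i ≠ 0}.toFinset ∪ {i : Fin m | e' i ≠ 0}.toFinset) ?_ ?_
    · simp [Matrix.mulVec_sum, Matrix.mulVec_smul, hker]
    · exact (Finset.card_union_le _ _).trans (by omega)
    · intro i hi
      rw [← encS_mulVec m q p N b d i j, hrow i]
      simp only [Finset.mem_union, Set.mem_toFinset, Set.mem_ofPred_eq, not_or, not_not] at hi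
      simp [hi.1, hi.2]
  ext c
  have hj : c.1 / q < p := by
    -- `⌊c / q⌋ + 1 = ⌊(c + q) / q⌋ ≤ ⌊(N + q - 1) / q⌋` because `c + 1 ≤ N`
    rw [hp, ← Nat.succ_le_iff, Nat.succ_eq_add_one, ← Nat.add_div_right _ hq0]
    exact Nat.div_le_div_right (by omega)
  have h := hchunk ⟨c.1 / q, hj⟩ ⟨c.1 % q, Nat.mod_lt _ hq0⟩
  simp only [chunk, Nat.div_add_mod', Fin.val_inj, Finset.sum_ite_eq, Finset.mem_univ,
    if_true] at h
  exact sub_eq_zero.1 h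
end

section
/- Let z_1, …, z_m be distinct nonzero real numbers, k ≤ m, and let F be the k×m Vandermonde matrix with F_{i,j} = z_j^{i−1}. Then for any e, e' ∈ ℝ^m with |supp(e)| ≤ ⌊k/2⌋ and |supp(e')| ≤ ⌊k/2⌋, the equality F e = F e' implies e = e'. That is, a vector e with at most ⌊k/2⌋ nonzero entries can be exactly reconstructed from f = F e. -/
/-!
The difference `d = e - e'` has at most `2 * (k / 2) ≤ k` nonzero entries and lies in the kernel
of `F`. Keeping only the columns of `F` in the support of `d` and as many of the top rows gives
a square (transposed) Vandermonde matrix with distinct nodes, which is nonsingular; hence `d = 0`.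
-/

open Matrix

/-- A vector supported on `S` with `S.card ≤ k` whose first `k` power moments at distinct nodes
vanish is zero: any `k` columns of the Vandermonde matrix are linearly independent. -/
lemma eq_zero_of_moments_eq_zero {k m : ℕ} {z : Fin m → ℝ} (hz : Function.Injective z)
    {d : Fin m → ℝ} (S : Finset (Fin m)) (hS : ∀ j, j ∉ S → d j = 0) (hcard : S.card ≤ k)
    (hd : ∀ i : ℕ, i < k → ∑ j, d j * z j ^ i = 0) : d = 0 := by
  let g := S.equivFin.symm
  have hinj : Function.Injective fun a => z (g a) :=
    hz.comp (Subtype.val_injective.comp g.injective)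
  have h0 : (fun a => d (g a)) = 0 := by
    refine Matrix.eq_zero_of_forall_pow_sum_mul_pow_eq_zero hinj fun i => ?_
    rw [g.sum_comp (fun j : S => d j * z j ^ (i : ℕ)),
      Finset.sum_coe_sort S (fun j => d j * z j ^ (i : ℕ)), ← hd i (i.2.trans_le hcard)]
    refine Finset.sum_subset (Finset.subset_univ S) fun j _ hj => ?_
    rw [hS j hj, zero_mul]
  funext j
  by_cases hj : j ∈ S
  · simpa [g] using congrFun h0 (S.equivFin ⟨j, hj⟩)
  · exact hS j hj

/-- Let `z 1, …, z m` be distinct nonzero reals, `k ≤ m`, and `F` the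
`k × m` Vandermonde matrix with entries `F i j = (z j)^i` (`0`-indexed exponents). Then for
any `e, e' ∈ ℝ^m` each having at most `⌊k/2⌋` nonzero entries, `F e = F e'` implies
`e = e'`; i.e., an `⌊k/2⌋`-sparse vector can be exactly reconstructed from `f = F e`. -/
theorem stmt_8 (k m : ℕ) (hkm : k ≤ m) (z : Fin m → ℝ)
    (hz : Function.Injective z) (hz0 : ∀ j, z j ≠ 0)
    (F : Matrix (Fin k) (Fin m) ℝ) (hF : ∀ i j, F i j = z j ^ (i : ℕ)) :
    ∀ e e' : Fin m → ℝ,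
      {j : Fin m | e j ≠ 0}.ncard ≤ k / 2 → {j : Fin m | e' j ≠ 0}.ncard ≤ k / 2 →
      F.mulVec e = F.mulVec e' → e = e' := by
  intro e e' he he' h
  classical
  have hd : e - e' = 0 := by
    refine eq_zero_of_moments_eq_zero (k := k) hz
      (Finset.univ.filter (fun j => e j ≠ 0) ∪ Finset.univ.filter (fun j => e' j ≠ 0)) ?_ ?_ ?_
    · intro j hj
      simp only [Finset.mem_union, Finset.mem_filter, Finset.mem_univ, true_and, not_or,
        not_not] at hj
      simp [hj.1, hj.2]
    · refine (Finset.card_union_le _ _).trans ?_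
      rw [Set.ncard_eq_toFinset_card', Set.toFinset_ofPred] at he he'
      omega
    · intro i hi
      have := congrFun h ⟨i, hi⟩
      simp only [Matrix.mulVec, dotProduct, hF] at this
      simp only [Pi.sub_apply, sub_mul, Finset.sum_sub_distrib, sub_eq_zero]
      simpa only [mul_comm] using this
  exact sub_eq_zero.mp hd
end
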